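/- Let k be a field, n ≥ 1 and d ≥ 1 natural numbers, let I be an ideal of k[x_1,…,x_n] generated by polynomials of total degree at most d, and fix i with 1 ≤ i ≤ n. If f ∈ k[x_i] is an irreducible polynomial in the single variable x_i and there exists g ∈ k[x_1,…,x_n] such that f·g ∈ I but g ∉ I, then the degree of f is at most 2^(n·2^(2n+6))·d^(n·2^(3n+2)). -/

import Mathlib

/-!
Write `n = N + 1` and view `k[x₁,…,x_n]` as `R[the other N variables]` with `R = k[xᵢ]`, and let
`K = R/(f)`. If `f g = ∑ hⱼ aⱼ` with generators `hⱼ` of `I`, then `a` is a syzygy of the `hⱼ`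
modulo `f`. If every syzygy over `K` lifts to a syzygy over `R`, then `a = a' + f b` with `a'` a
syzygy, hence `g = ∑ hⱼ bⱼ ∈ I` (`cancel_of_large_degree`). So it suffices to lift generators of the
syzygy module over `K`.

By Hermann's theorem (`syzBound_field`) this module is generated in degree at most
`B = (2 d) ^ 2 ^ N`. It is proved by eliminating one variable at a time: after a linear change of
coordinates a maximal nonzero minor is monic in that variable, and division by it bounds the degree
of the solutions in that variable, up to Cramer solutions of small degree. This requires an infinite
field; a `K`-linear retraction of the algebraic closure onto `K` gives the general case.

Syzygies of degree at most `B` are the kernel of a matrix over `R` with at most `(B + d + 1) ^ N`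
rows and entries of degree at most `d`. If `deg f > (B + d + 1) ^ N * d`, then `f` divides no
nonzero minor, and Cramer's rule lifts kernel vectors from `K` to `R` (`exists_lift_kernel`). Hence
`deg f ≤ (B + d + 1) ^ N * d`, which is far below the stated bound.

Both uses of Cramer's rule rest on `exists_genInv`: a relation `A W A = δ A` with `δ ≠ 0` and degree
control.
-/

open Matrix MvPolynomial

/-! ### Generalized inverses with degree control -/

/-- `F` is an increasing multiplicative filtration of `R` by additive subgroups. It serves to treat
total degree in `K[x₁,…,x_N]` and degree in `k[X]` simultaneously. -/
structure IsFilt {R : Type*} [CommRing R] (F : ℕ → AddSubgroup R) : Prop where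
  one_mem : (1 : R) ∈ F 0
  mono : Monotone F
  mul_mem : ∀ {i j : ℕ} {a b : R}, a ∈ F i → b ∈ F j → a * b ∈ F (i + j)

lemma IsFilt.det_mem {R : Type*} [CommRing R] {F : ℕ → AddSubgroup R} (hF : IsFilt F) {d r : ℕ}
    (S : Matrix (Fin r) (Fin r) R) (hS : ∀ a b, S a b ∈ F d) : S.det ∈ F (r * d) := by
  have hprod : ∀ (s : Finset (Fin r)) (u : Fin r → R), (∀ a, u a ∈ F d) →
      ∏ a ∈ s, u a ∈ F (s.card * d) := by
    intro s u hu
    induction s using Finset.induction_on with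
    | empty => simpa using hF.one_mem
    | insert a s ha ih =>
      rw [Finset.prod_insert ha, Finset.card_insert_of_notMem ha,
        show (s.card + 1) * d = d + s.card * d by ring]
      exact hF.mul_mem (hu a) ih
  rw [Matrix.det_apply]
  refine AddSubgroup.sum_mem _ fun σ _ => ?_
  have h := hprod Finset.univ (fun a => S (σ a) a) fun a => hS _ _
  rw [Finset.card_univ, Fintype.card_fin] at h
  rcases Int.units_eq_one_or (Equiv.Perm.sign σ) with hs | hs <;> rw [hs]
  · simpa using h
  · simpa using h

/-- Expanding the vanishing minors that border a nonzero minor of maximal size shows that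
`A[·,c] · adj(A[ρ,c]) · A[ρ,·] = det(A[ρ,c]) • A`. -/
lemma bordered {R : Type*} [CommRing R] [IsDomain R] {ι κ : Type*} (A : Matrix ι κ R) {r : ℕ}
    (ρ : Fin r → ι) (c : Fin r → κ) (h : (A.submatrix ρ c).det ≠ 0)
    (hmax : ∀ (ρ' : Fin (r + 1) → ι) (c' : Fin (r + 1) → κ), (A.submatrix ρ' c').det = 0) :
    A.submatrix id c * (A.submatrix ρ c).adjugate * A.submatrix ρ id =
      (A.submatrix ρ c).det • A := by
  ext i j
  set S := A.submatrix ρ c with hS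
  let B : Matrix (Fin r) (Fin 1) R := A.submatrix ρ (fun _ => j)
  let C : Matrix (Fin 1) (Fin r) R := A.submatrix (fun _ => i) c
  let D : Matrix (Fin 1) (Fin 1) R := A.submatrix (fun _ => i) (fun _ => j)
  have hM : (fromBlocks S B C D).det = 0 := by
    have h0 := hmax (Sum.elim ρ (fun _ : Fin 1 => i) ∘ finSumFinEquiv.symm)
      (Sum.elim c (fun _ : Fin 1 => j) ∘ finSumFinEquiv.symm)
    rw [← Matrix.submatrix_submatrix, Matrix.det_submatrix_equiv_self] at h0
    rw [← h0]
    congr 1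
    ext (a | a) (b | b) <;> simp [S, B, C, D]
  have hmul : fromBlocks (1 : Matrix (Fin r) (Fin r) R) 0 (-(C * S.adjugate)) (S.det • 1) *
      fromBlocks S B C D = fromBlocks S B 0 (S.det • D - C * S.adjugate * B) := by
    rw [fromBlocks_multiply]
    congr 1
    · simp
    · simp
    · simp [Matrix.mul_assoc, Matrix.adjugate_mul]
    · simp [Matrix.mul_assoc]; abel
  have hdet := congrArg Matrix.det hmul
  rw [det_mul, hM, mul_zero, det_fromBlocks_zero₂₁] at hdet
  have h1 := (mul_eq_zero.mp hdet.symm).resolve_left h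
  rw [Matrix.det_fin_one] at h1
  have h2 : (C * S.adjugate * B) 0 0 = S.det * A i j := by
    have := sub_eq_zero.mp h1
    simpa [D] using this.symm
  rw [Matrix.smul_apply, smul_eq_mul, ← h2]
  simp [Matrix.mul_apply, B, C]

/-- Every matrix `A` over a domain has a generalized inverse up to a nonzero factor: `A W A = δ A`,
where `δ` is a nonzero minor of maximal size and `W` comes from the adjugate of that submatrix. By
Cramer's rule the entries of `W A` are minors of `A`, which gives the same degree bound as for `δ`.
Consequently the columns of `δ - W A` lie in `ker A`, and `δ - W A` acts as `δ` on `ker A`. -/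
lemma exists_genInv {R : Type*} [CommRing R] [IsDomain R] {ι κ : Type*} [Fintype ι] [Fintype κ]
    [DecidableEq ι] [DecidableEq κ] {F : ℕ → AddSubgroup R} (hF : IsFilt F) {d : ℕ}
    (A : Matrix ι κ R) (hA : ∀ i j, A i j ∈ F d) :
    ∃ δ : R, δ ≠ 0 ∧ δ ∈ F (Fintype.card ι * d) ∧ ∃ W : Matrix κ ι R,
      A * W * A = δ • A ∧ ∀ a b, (W * A) a b ∈ F (Fintype.card ι * d) := by
  classical
  let P : ℕ → Prop := fun r => ∃ (ρ : Fin r → ι) (c : Fin r → κ), (A.submatrix ρ c).det ≠ 0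
  have hP0 : P 0 := ⟨Fin.elim0, Fin.elim0, by simp⟩
  have hPle : ∀ r, P r → r ≤ Fintype.card ι := by
    rintro r ⟨ρ, c, h⟩
    have hinj : Function.Injective ρ := by
      intro a b hab
      by_contra hne
      exact h (Matrix.det_zero_of_row_eq hne (by ext x; simp [hab]))
    simpa using Fintype.card_le_of_injective ρ hinj
  let r := Nat.findGreatest P (Fintype.card ι)
  have hr : P r := Nat.findGreatest_spec (Nat.zero_le _) hP0
  have hr1 : ¬ P (r + 1) := fun h =>
    absurd (Nat.le_findGreatest (hPle _ h) h) (by simp [r])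
  have hrc := hPle r hr
  obtain ⟨ρ, c, h⟩ := hr
  have hmax : ∀ (ρ' : Fin (r + 1) → ι) (c' : Fin (r + 1) → κ), (A.submatrix ρ' c').det = 0 := by
    intro ρ' c'
    by_contra hne
    exact hr1 ⟨ρ', c', hne⟩
  have hle : F (r * d) ≤ F (Fintype.card ι * d) := hF.mono (Nat.mul_le_mul_right d hrc)
  have hρ : (1 : Matrix ι ι R).submatrix ρ id * A = A.submatrix ρ id := by
    ext a b; simp [Matrix.mul_apply, Matrix.one_apply]
  have hc : A * (1 : Matrix κ κ R).submatrix id c = A.submatrix id c := by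
    ext a b; simp [Matrix.mul_apply, Matrix.one_apply]
  refine ⟨_, h, hle (hF.det_mem _ fun a b => hA _ _),
    (1 : Matrix κ κ R).submatrix id c * (A.submatrix ρ c).adjugate *
      (1 : Matrix ι ι R).submatrix ρ id, ?_, ?_⟩
  · rw [← bordered A ρ c h hmax, Matrix.mul_assoc _ _ A, Matrix.mul_assoc _ _ A, hρ,
      ← Matrix.mul_assoc, ← Matrix.mul_assoc, hc]
  · intro a b
    rw [Matrix.mul_assoc _ _ A, hρ, Matrix.mul_assoc, Matrix.mul_apply]
    refine AddSubgroup.sum_mem _ fun x _ => ?_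
    have hx : ((A.submatrix ρ c).adjugate * A.submatrix ρ id) x b ∈ F (Fintype.card ι * d) := by
      have : ((A.submatrix ρ c).adjugate * A.submatrix ρ id) x b =
          ((A.submatrix ρ c).updateCol x (fun y => A (ρ y) b)).det := by
        rw [← Matrix.cramer_apply, Matrix.cramer_eq_adjugate_mulVec]
        simp [Matrix.mul_apply, Matrix.mulVec, dotProduct]
      rw [this]
      refine hle (hF.det_mem _ fun y z => ?_)
      rw [Matrix.updateCol_apply]
      split_ifs
      · exact hA _ _
      · exact hA _ _
    by_cases hax : a = c x
    · simpa [Matrix.one_apply, hax] using hx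
    · simp [hax]

/-! ### Linear changes of coordinates -/

lemma totalDegree_aeval_le_of_linear {K : Type*} [Field K] {σ τ : Type*}
    (v : σ → MvPolynomial τ K) (hv : ∀ j, (v j).totalDegree ≤ 1) (p : MvPolynomial σ K) :
    (aeval v p).totalDegree ≤ p.totalDegree := by
  rw [aeval_def, eval₂_eq]
  refine totalDegree_finsetSum_le fun m hm => ?_
  refine (totalDegree_mul _ _).trans ?_
  rw [MvPolynomial.algebraMap_eq, totalDegree_C, zero_add]
  refine (totalDegree_finsetProd _ _).trans (le_trans (Finset.sum_le_sum fun j _ => ?_)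
    (le_totalDegree hm))
  refine (totalDegree_pow _ _).trans ?_
  simpa using Nat.mul_le_mul_left (m j) (hv j)

/-- The substitution `x₀ ↦ a₀ x₀`, `xⱼ ↦ xⱼ + aⱼ x₀` for `j > 0`. -/
noncomputable def shear {K : Type*} [Field K] {N : ℕ} (a : Fin (N + 1) → K) :
    MvPolynomial (Fin (N + 1)) K →ₐ[K] MvPolynomial (Fin (N + 1)) K :=
  aeval (Fin.cons (C (a 0) * X 0) fun j => X j.succ + C (a j.succ) * X 0)

lemma totalDegree_shear_le {K : Type*} [Field K] {N : ℕ} (a : Fin (N + 1) → K)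
    (p : MvPolynomial (Fin (N + 1)) K) : (shear a p).totalDegree ≤ p.totalDegree := by
  refine totalDegree_aeval_le_of_linear _ (fun j => ?_) p
  have h : ∀ b : K, (C b * X 0 : MvPolynomial (Fin (N + 1)) K).totalDegree ≤ 1 := fun b =>
    (totalDegree_mul _ _).trans (by simp)
  refine Fin.cases ?_ (fun j => ?_) j
  · simpa using h _
  · simp only [Fin.cons_succ]
    exact (totalDegree_add _ _).trans (max_le (by simp) (h _))

lemma shear_comp {K : Type*} [Field K] {N : ℕ} (a b : Fin (N + 1) → K) (h0 : a 0 * b 0 = 1)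
    (h1 : ∀ j : Fin N, a j.succ + b j.succ * a 0 = 0) :
    (shear a).comp (shear b) = AlgHom.id K _ := by
  refine MvPolynomial.algHom_ext fun j => ?_
  refine Fin.cases ?_ (fun j => ?_) j
  · simp only [shear, AlgHom.comp_apply, aeval_X, Fin.cons_zero, map_mul, algHom_C, AlgHom.id_apply,
      MvPolynomial.algebraMap_eq]
    rw [← mul_assoc, ← C_mul, mul_comm (b 0), h0, C_1, one_mul]
  · simp only [shear, AlgHom.comp_apply, aeval_X, Fin.cons_succ, Fin.cons_zero, map_mul, map_add,
      algHom_C, AlgHom.id_apply, MvPolynomial.algebraMap_eq]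
    rw [add_assoc, ← mul_assoc, ← C_mul, ← add_mul, ← C_add, h1, C_0, zero_mul, add_zero]

/-- Restricting `p` to the line spanned by `a` turns homogeneous components into coefficients. -/
lemma coeff_aeval_line {K : Type*} [Field K] {σ : Type*} (a : σ → K) (D : ℕ)
    (p : MvPolynomial σ K) :
    (aeval (fun j => Polynomial.C (a j) * Polynomial.X) p : Polynomial K).coeff D =
      eval a (homogeneousComponent D p) := by
  induction p using MvPolynomial.induction_on' with
  | monomial m r =>
    rw [homogeneousComponent_of_mem (isHomogeneous_monomial r rfl), aeval_monomial]
    simp only [mul_pow, Finsupp.prod_mul, ← Polynomial.C_pow]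
    have h1 : (m.prod fun j e => (Polynomial.X : Polynomial K) ^ e) = Polynomial.X ^ m.degree := by
      rw [Finsupp.prod, Finset.prod_pow_eq_pow_sum]; rfl
    have h2 : (m.prod fun j e => Polynomial.C (a j ^ e)) =
        Polynomial.C (m.prod fun j e => a j ^ e) := by
      simp [Finsupp.prod]
    rw [h1, h2, Polynomial.algebraMap_eq, ← mul_assoc, ← Polynomial.C_mul, Polynomial.coeff_C_mul,
      Polynomial.coeff_X_pow]
    split_ifs <;> simp [eval_monomial]
  | add p q hp hq => simp [hp, hq]

/-- Over an infinite field, a linear change of coordinates makes a nonzero polynomial monic in `x₀`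
up to a unit constant. The direction `a` is chosen off the zero locus of the top homogeneous
component, and off `a₀ = 0` so that the substitution is invertible. -/
lemma exists_linear_change {K : Type*} [Field K] [Infinite K] {N : ℕ}
    (δ : MvPolynomial (Fin (N + 1)) K) (hδ : δ ≠ 0) :
    ∃ s : MvPolynomial (Fin (N + 1)) K ≃ₐ[K] MvPolynomial (Fin (N + 1)) K,
      (∀ p, (s p).totalDegree ≤ p.totalDegree) ∧ (∀ p, (s.symm p).totalDegree ≤ p.totalDegree) ∧
      IsUnit (finSuccEquiv K N (s δ)).leadingCoeff := by
  set D := δ.totalDegree with hD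
  have hH : homogeneousComponent D δ ≠ 0 := by
    obtain ⟨m, hm, hmD⟩ := Finset.exists_mem_eq_sup δ.support (support_nonempty.mpr hδ)
      fun m => m.sum fun _ e => e
    intro h
    have := congrArg (coeff m) h
    rw [coeff_homogeneousComponent, if_pos (show m.degree = D from hmD.symm)] at this
    exact (mem_support_iff.mp hm) (by simpa using this)
  obtain ⟨a, ha⟩ : ∃ a, eval a (X 0 * homogeneousComponent D δ) ≠ 0 := by
    by_contra! h
    exact mul_ne_zero (X_ne_zero 0) hH (MvPolynomial.funext fun a => by simpa using h a)
  rw [map_mul, eval_X] at ha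
  have ha0 : a 0 ≠ 0 := left_ne_zero_of_mul ha
  have haH := right_ne_zero_of_mul ha
  let b : Fin (N + 1) → K := Fin.cons (a 0)⁻¹ fun j => -(a j.succ * (a 0)⁻¹)
  have hab : (shear a).comp (shear b) = AlgHom.id K _ :=
    shear_comp a b (by simp [b, ha0]) fun j => by simp [b, ha0]
  have hba : (shear b).comp (shear a) = AlgHom.id K _ :=
    shear_comp b a (by simp [b, ha0]) fun j => by simp [b]
  refine ⟨AlgEquiv.ofAlgHom (shear a) (shear b) hab hba, totalDegree_shear_le a,
    totalDegree_shear_le b, ?_⟩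
  rw [AlgEquiv.ofAlgHom_apply]
  set Q := finSuccEquiv K N (shear a δ) with hQ
  have hline : Q.map (constantCoeff : MvPolynomial (Fin N) K →+* K) =
      aeval (fun j => Polynomial.C (a j) * Polynomial.X) δ := by
    have : ((Polynomial.mapAlgHom (aeval (fun _ => 0) : MvPolynomial (Fin N) K →ₐ[K] K)).comp
        (finSuccEquiv K N).toAlgHom).comp (shear a) =
        aeval (fun j => Polynomial.C (a j) * Polynomial.X) := by
      refine MvPolynomial.algHom_ext fun j => ?_
      refine Fin.cases ?_ (fun j => ?_) j <;>
        simp [shear, MvPolynomial.finSuccEquiv_apply]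
    rw [← this]
    simp only [AlgHom.comp_apply, Polynomial.coe_mapAlgHom]
    congr 1
    refine MvPolynomial.ringHom_ext (fun r => by simp) fun j => by simp
  have hc : constantCoeff (Q.coeff D) ≠ 0 := by
    rw [← Polynomial.coeff_map, hline, coeff_aeval_line]; exact haH
  have hQD : Q.coeff D ≠ 0 := fun h => hc (by simp [h])
  have hdeg := totalDegree_coeff_finSuccEquiv_add_le (shear a δ) D hQD
  have hle : ∀ i, Q.coeff i ≠ 0 → i ≤ D := fun i hi => by
    have h1 := totalDegree_coeff_finSuccEquiv_add_le (shear a δ) i hi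
    have h2 := totalDegree_shear_le a δ
    omega
  have hnat : Q.natDegree = D := le_antisymm
    (hle _ (by
      rw [Polynomial.coeff_natDegree, Ne, Polynomial.leadingCoeff_eq_zero]
      rintro h; exact hQD (by simp [h])))
    (Polynomial.le_natDegree_of_ne_zero hQD)
  have h0 : (Q.coeff D).totalDegree = 0 := by
    have h2 := totalDegree_shear_le a δ
    rw [← hQ] at hdeg
    omega
  rw [Polynomial.leadingCoeff, hnat, totalDegree_eq_zero_iff_eq_C.mp h0]
  exact (isUnit_iff_ne_zero.mpr hc).map C

/-! ### Degree bounds for generators of syzygy modules -/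

lemma isFilt_totalDegree (K : Type*) [Field K] (σ : Type*) :
    IsFilt fun d => (restrictTotalDegree σ K d).toAddSubgroup where
  one_mem := by simp [mem_restrictTotalDegree]
  mono := by
    intro a b hab p hp
    simp only [Submodule.mem_toAddSubgroup, mem_restrictTotalDegree] at hp ⊢
    exact hp.trans hab
  mul_mem := by
    intro a b p q hp hq
    simp only [Submodule.mem_toAddSubgroup, mem_restrictTotalDegree] at hp hq ⊢
    exact (totalDegree_mul _ _).trans (add_le_add hp hq)

/-- The submodule generated by those `z ∈ ker A` whose entries have total degree at most `B`. -/
noncomputable def syzSpan {K : Type*} [Field K] {N : ℕ} {ι κ : Type} [Fintype κ]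
    (A : Matrix ι κ (MvPolynomial (Fin N) K)) (B : ℕ) :
    Submodule (MvPolynomial (Fin N) K) (κ → MvPolynomial (Fin N) K) :=
  Submodule.span _ {z | A *ᵥ z = 0 ∧ ∀ j, (z j).totalDegree ≤ B}

/-- For every matrix over `K[x₁,…,x_N]` with at most `P` rows and entries of total degree at most
`d`, the kernel is generated by vectors with entries of total degree at most `B`; the number of
columns is arbitrary. -/
def SyzBound (K : Type*) [Field K] (N P d B : ℕ) : Prop :=
  ∀ (ι κ : Type) [Fintype ι] [Fintype κ] [DecidableEq ι] [DecidableEq κ], Fintype.card ι ≤ P →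
    ∀ A : Matrix ι κ (MvPolynomial (Fin N) K), (∀ i j, (A i j).totalDegree ≤ d) →
      ∀ y, A *ᵥ y = 0 → y ∈ syzSpan A B

lemma exists_div_rem {R : Type*} [CommRing R] [Nontrivial R] (p x : Polynomial R)
    (hp : IsUnit p.leadingCoeff) :
    ∃ q r, x = p * q + r ∧ r.degree < p.degree := by
  have hm := Polynomial.monic_of_isUnit_leadingCoeff_inv_smul hp
  set u := hp.unit⁻¹
  refine ⟨u • (x /ₘ (u • p)), x %ₘ (u • p), ?_, ?_⟩
  · have := Polynomial.modByMonic_add_div x (u • p)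
    rw [mul_smul_comm, ← smul_mul_assoc, add_comm]
    exact this.symm
  · have h := Polynomial.degree_modByMonic_lt x hm
    have h2 : (u • p).degree ≤ p.degree := Polynomial.degree_smul_le (u : R) p
    exact h.trans_le h2

lemma natDegree_finSuccEquiv_le {K : Type*} [Field K] {N : ℕ} (p : MvPolynomial (Fin (N + 1)) K) :
    (finSuccEquiv K N p).natDegree ≤ p.totalDegree := by
  rw [natDegree_finSuccEquiv]
  exact degreeOf_le_totalDegree _ _

lemma totalDegree_coeff_finSuccEquiv_le {K : Type*} [Field K] {N : ℕ}
    (p : MvPolynomial (Fin (N + 1)) K) (i : ℕ) :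
    ((finSuccEquiv K N p).coeff i).totalDegree ≤ p.totalDegree := by
  by_cases h : (finSuccEquiv K N p).coeff i = 0
  · simp [h]
  · exact le_trans (Nat.le_add_right _ _) (totalDegree_coeff_finSuccEquiv_add_le p i h)

lemma finSuccEquiv_rename_succ {K : Type*} [Field K] {N : ℕ} (p : MvPolynomial (Fin N) K) :
    finSuccEquiv K N (rename Fin.succ p) = Polynomial.C p := by
  induction p using MvPolynomial.induction_on with
  | C a => simp [MvPolynomial.finSuccEquiv_apply]
  | add p q hp hq => simp [hp, hq]
  | mul_X p j hp => simp [hp, finSuccEquiv_X_succ]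

/-- Assembles a polynomial vector from its coefficients with respect to `x₀`. -/
noncomputable def assemble {K : Type*} [Field K] {N E : ℕ} {κ : Type}
    (z : κ × Fin E → MvPolynomial (Fin N) K) (j : κ) : MvPolynomial (Fin (N + 1)) K :=
  ∑ b : Fin E, rename Fin.succ (z (j, b)) * X 0 ^ (b : ℕ)

lemma finSuccEquiv_assemble {K : Type*} [Field K] {N E : ℕ} {κ : Type}
    (z : κ × Fin E → MvPolynomial (Fin N) K) (j : κ) :
    finSuccEquiv K N (assemble z j) =
      ∑ b : Fin E, Polynomial.C (z (j, b)) * Polynomial.X ^ (b : ℕ) := by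
  simp [assemble, finSuccEquiv_rename_succ, finSuccEquiv_X_zero]

lemma totalDegree_assemble_le {K : Type*} [Field K] {N E B : ℕ} {κ : Type}
    (z : κ × Fin E → MvPolynomial (Fin N) K) (hz : ∀ x, (z x).totalDegree ≤ B) (j : κ) :
    (assemble z j).totalDegree ≤ B + E := by
  refine totalDegree_finsetSum_le fun b _ => (totalDegree_mul _ _).trans (add_le_add ?_ ?_)
  · exact (totalDegree_rename_le _ _).trans (hz _)
  · rw [totalDegree_X_pow]; exact b.2.le

/-- The matrix over `K[x₁,…,x_N]` that describes `A` on vectors of `x₀`-degree less than `E`, as far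
as the coefficients of `x₀ᵃ` with `a < E'` of the result are concerned. -/
noncomputable def coeffMatrix {K : Type*} [Field K] {N : ℕ} {ι κ : Type}
    (A : Matrix ι κ (MvPolynomial (Fin (N + 1)) K)) (E E' : ℕ) :
    Matrix (ι × Fin E') (κ × Fin E) (MvPolynomial (Fin N) K) :=
  Matrix.of fun x y => (finSuccEquiv K N (A x.1 y.1) * Polynomial.X ^ (y.2 : ℕ)).coeff x.2

lemma coeffMatrix_mulVec {K : Type*} [Field K] {N E E' : ℕ} {ι κ : Type} [Fintype κ]
    (A : Matrix ι κ (MvPolynomial (Fin (N + 1)) K)) (z : κ × Fin E → MvPolynomial (Fin N) K)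
    (i : ι) (a : Fin E') :
    (coeffMatrix A E E' *ᵥ z) (i, a) = (finSuccEquiv K N ((A *ᵥ assemble z) i)).coeff a := by
  simp only [Matrix.mulVec, dotProduct, coeffMatrix, Matrix.of_apply, map_sum, map_mul,
    finSuccEquiv_assemble, Fintype.sum_prod_type, Finset.mul_sum, Polynomial.finsetSum_coeff]
  refine Finset.sum_congr rfl fun j _ => Finset.sum_congr rfl fun b _ => ?_
  rw [mul_left_comm, Polynomial.coeff_C_mul, mul_comm]

/-- A kernel vector of `x₀`-degree less than `E` solves a linear system in one variable less, obtained
by comparing the coefficients of the powers `x₀ᵃ` with `a < E + d`. -/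
lemma syz_of_degree_lt {K : Type*} [Field K] {N P d E B : ℕ}
    (hB : SyzBound K N (P * (E + d)) d B) {ι κ : Type} [Fintype ι] [Fintype κ]
    [DecidableEq ι] [DecidableEq κ] (hι : Fintype.card ι ≤ P)
    (A : Matrix ι κ (MvPolynomial (Fin (N + 1)) K)) (hA : ∀ i j, (A i j).totalDegree ≤ d)
    (y : κ → MvPolynomial (Fin (N + 1)) K) (hy : A *ᵥ y = 0)
    (hdeg : ∀ j, (finSuccEquiv K N (y j)).degree < E) :
    y ∈ syzSpan A (B + E) := by
  let z : κ × Fin E → MvPolynomial (Fin N) K := fun x => (finSuccEquiv K N (y x.1)).coeff x.2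
  have hz : assemble z = y := by
    funext j
    apply (finSuccEquiv K N).injective
    rw [finSuccEquiv_assemble]
    simp only [z, Polynomial.C_mul_X_pow_eq_monomial]
    rw [Fin.sum_univ_eq_sum_range
      (fun b => Polynomial.monomial b ((finSuccEquiv K N (y j)).coeff b)) E]
    by_cases h0 : finSuccEquiv K N (y j) = 0
    · simp [h0]
    · exact (Polynomial.as_sum_range' _ E ((Polynomial.natDegree_lt_iff_degree_lt h0).mpr
        (hdeg j))).symm
  have hker : coeffMatrix A E (E + d) *ᵥ z = 0 := by
    funext x
    rw [coeffMatrix_mulVec, hz, hy]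
    simp
  have hcard : Fintype.card (ι × Fin (E + d)) ≤ P * (E + d) := by
    rw [Fintype.card_prod, Fintype.card_fin]
    exact Nat.mul_le_mul_right _ hι
  have hmem := hB _ _ hcard (coeffMatrix A E (E + d)) (fun x w => by
    simp only [coeffMatrix, Matrix.of_apply, Polynomial.coeff_mul_X_pow']
    split_ifs
    · exact (totalDegree_coeff_finSuccEquiv_le _ _).trans (hA _ _)
    · simp) z hker
  rw [← hz]
  clear_value z
  clear hz hker
  unfold syzSpan at hmem
  induction hmem using Submodule.span_induction with
  | mem w hw =>
    refine Submodule.subset_span ⟨?_, totalDegree_assemble_le w hw.2⟩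
    funext i
    apply (finSuccEquiv K N).injective
    ext1 a
    rw [Pi.zero_apply, map_zero, Polynomial.coeff_zero]
    by_cases ha : a < E + d
    · have := coeffMatrix_mulVec (E' := E + d) A w i ⟨a, ha⟩
      rw [hw.1] at this
      exact this.symm
    · apply Polynomial.coeff_eq_zero_of_degree_lt
      refine lt_of_lt_of_le (b := ((E + d : ℕ) : WithBot ℕ)) ?_ (by exact_mod_cast not_lt.mp ha)
      rw [← Polynomial.mem_degreeLT]
      simp only [Matrix.mulVec, dotProduct, map_sum, map_mul, finSuccEquiv_assemble, Finset.mul_sum]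
      refine Submodule.sum_mem _ fun j _ => Submodule.sum_mem _ fun b _ => ?_
      rw [Polynomial.mem_degreeLT]
      refine lt_of_le_of_lt Polynomial.degree_le_natDegree ?_
      have h1 : (finSuccEquiv K N (A i j)).natDegree ≤ d :=
        (natDegree_finSuccEquiv_le _).trans (hA i j)
      have h2 := Polynomial.natDegree_mul_le (p := finSuccEquiv K N (A i j))
        (q := Polynomial.C (w (j, b)) * Polynomial.X ^ (b : ℕ))
      have h3 := Polynomial.natDegree_C_mul_X_pow_le (w (j, b)) b
      have h4 := b.2
      exact_mod_cast (by omega)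
  | zero =>
    have : assemble (0 : κ × Fin E → MvPolynomial (Fin N) K) = 0 := by
      funext j; simp [assemble]
    rw [this]; exact Submodule.zero_mem _
  | add u v _ _ hu hv =>
    have : assemble (u + v) = assemble u + assemble v := by
      funext j; simp [assemble, add_mul, Finset.sum_add_distrib]
    rw [this]; exact Submodule.add_mem _ hu hv
  | smul c u _ hu =>
    have : assemble (c • u) = rename Fin.succ c • assemble u := by
      funext j; simp [assemble, Finset.mul_sum, mul_assoc]
    rw [this]; exact Submodule.smul_mem _ _ hu

/-- Elimination of `x₀` when `δ` is monic in `x₀` up to a unit: with `V = δ - W A`, dividing the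
entries of `y` by `δ` as `y = δ q + r` gives `δ (y - V q) = V r`, so that `y - V q` has `x₀`-degree
less than `E`, while `V q` is a combination of the columns of `V`. -/
lemma syz_step_normalized {K : Type*} [Field K] {N P d E B : ℕ}
    (hB : SyzBound K N (P * (E + d)) d B) {ι κ : Type} [Fintype ι] [Fintype κ]
    [DecidableEq ι] [DecidableEq κ] (hι : Fintype.card ι ≤ P)
    (A : Matrix ι κ (MvPolynomial (Fin (N + 1)) K)) (hA : ∀ i j, (A i j).totalDegree ≤ d)
    (δ : MvPolynomial (Fin (N + 1)) K) (hδ : IsUnit (finSuccEquiv K N δ).leadingCoeff)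
    (hδE : δ.totalDegree ≤ E) (W : Matrix κ ι (MvPolynomial (Fin (N + 1)) K))
    (hW : A * W * A = δ • A) (hWE : ∀ a b, ((W * A) a b).totalDegree ≤ E)
    (y : κ → MvPolynomial (Fin (N + 1)) K) (hy : A *ᵥ y = 0) :
    y ∈ syzSpan A (B + E) := by
  set e := finSuccEquiv K N
  set V : Matrix κ κ (MvPolynomial (Fin (N + 1)) K) := δ • 1 - W * A with hV
  have hAV : A * V = 0 := by
    rw [hV, Matrix.mul_sub, ← Matrix.mul_assoc, hW]; simp
  have hVE : ∀ a b, (V a b).totalDegree ≤ E := by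
    intro a b
    rw [hV, Matrix.sub_apply]
    refine (totalDegree_sub _ _).trans (max_le ?_ (hWE a b))
    by_cases hab : a = b
    · simpa [hab] using hδE
    · simp [hab]
  have hVy : V *ᵥ y = δ • y := by
    rw [hV, Matrix.sub_mulVec, ← Matrix.mulVec_mulVec, hy]
    simp [Matrix.smul_mulVec]
  have hdiv : ∀ j, ∃ q r, y j = δ * q + r ∧ (e r).degree < (e δ).degree := by
    intro j
    obtain ⟨q, r, h1, h2⟩ := exists_div_rem (e δ) (e (y j)) hδ
    refine ⟨e.symm q, e.symm r, e.injective ?_, by simpa using h2⟩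
    simpa using h1
  choose q r hqr hr using hdiv
  have hy' : y = (y - V *ᵥ q) + V *ᵥ q := by abel
  have hVq : A *ᵥ (V *ᵥ q) = 0 := by rw [Matrix.mulVec_mulVec, hAV, Matrix.zero_mulVec]
  have hkey : δ • (y - V *ᵥ q) = V *ᵥ r := by
    have : r = y - δ • q := by
      funext j; simp [hqr j]
    rw [this, Matrix.mulVec_sub, hVy, Matrix.mulVec_smul, smul_sub]
  have hlow : y - V *ᵥ q ∈ syzSpan A (B + E) := by
    refine syz_of_degree_lt hB hι A hA _ (by rw [Matrix.mulVec_sub, hy, hVq, sub_zero]) fun j => ?_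
    have hδ0 : e δ ≠ 0 := by
      intro h; rw [h] at hδ; simp at hδ
    have h1 : (e δ * e ((y - V *ᵥ q) j)).degree < ((E + (e δ).natDegree : ℕ) : WithBot ℕ) := by
      have h2 := congrFun hkey j
      rw [Pi.smul_apply, smul_eq_mul] at h2
      rw [← map_mul, h2, ← Polynomial.mem_degreeLT]
      simp only [Matrix.mulVec, dotProduct, map_sum, map_mul]
      refine Submodule.sum_mem _ fun l _ => ?_
      rw [Polynomial.mem_degreeLT]
      by_cases hr0 : e (r l) = 0
      · simp [hr0]
      · have h3 := Polynomial.natDegree_lt_natDegree hr0 (hr l)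
        have h4 : (e (V j l)).natDegree ≤ E := (natDegree_finSuccEquiv_le _).trans (hVE j l)
        have h5 := Polynomial.natDegree_mul_le (p := e (V j l)) (q := e (r l))
        refine lt_of_le_of_lt Polynomial.degree_le_natDegree ?_
        exact_mod_cast (by omega)
    by_cases h0 : e ((y - V *ᵥ q) j) = 0
    · rw [h0, Polynomial.degree_zero]; exact WithBot.bot_lt_coe _
    · rw [← Polynomial.natDegree_lt_iff_degree_lt (mul_ne_zero hδ0 h0),
        Polynomial.natDegree_mul hδ0 h0] at h1
      rw [← Polynomial.natDegree_lt_iff_degree_lt h0]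
      omega
  rw [hy']
  refine Submodule.add_mem _ hlow ?_
  have hcol : V *ᵥ q = ∑ l, q l • V.col l := by
    funext j; simp [Matrix.mulVec, dotProduct, mul_comm]
  rw [hcol]
  refine Submodule.sum_mem _ fun l _ => Submodule.smul_mem _ _ (Submodule.subset_span ⟨?_, ?_⟩)
  · funext i
    exact congrFun (congrFun hAV i) l
  · intro j
    exact (hVE j l).trans (Nat.le_add_left _ _)

lemma syz_step {K : Type*} [Field K] [Infinite K] {N P d B : ℕ}
    (hB : SyzBound K N (P * (P * d + d)) d B) : SyzBound K (N + 1) P d (B + P * d) := by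
  intro ι κ _ _ _ _ hι A hA y hy
  obtain ⟨δ, hδ0, hδ, W, hW, hWd⟩ := exists_genInv (isFilt_totalDegree K (Fin (N + 1))) (d := d) A
    (fun i j => by simpa [mem_restrictTotalDegree] using hA i j)
  simp only [Submodule.mem_toAddSubgroup, mem_restrictTotalDegree] at hδ hWd
  have hle : Fintype.card ι * d ≤ P * d := Nat.mul_le_mul_right d hι
  obtain ⟨s, hs, hs', hu⟩ := exists_linear_change δ hδ0
  have hmem := syz_step_normalized hB hι (A.map s) (fun i j => (hs _).trans (hA i j)) (s δ) hu
    ((hs δ).trans (hδ.trans hle)) (W.map s) (by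
      rw [← Matrix.map_mul, ← Matrix.map_mul, hW]
      ext1 i j; simp) (fun a b => by
      rw [← Matrix.map_mul]
      exact (hs _).trans ((hWd a b).trans hle)) (s ∘ y) (by
      funext i
      have := congrArg s (congrFun hy i)
      simpa [Matrix.mulVec, dotProduct] using this)
  have hback : ∀ w ∈ syzSpan (A.map s) (B + P * d), s.symm ∘ w ∈ syzSpan A (B + P * d) := by
    intro w hw
    unfold syzSpan at hw
    induction hw using Submodule.span_induction with
    | mem w hw =>
      refine Submodule.subset_span ⟨?_, fun j => (hs' _).trans (hw.2 j)⟩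
      funext i
      have := congrArg s.symm (congrFun hw.1 i)
      simpa [Matrix.mulVec, dotProduct] using this
    | zero =>
      have : s.symm ∘ (0 : κ → MvPolynomial (Fin (N + 1)) K) = 0 := by funext j; simp
      rw [this]; exact Submodule.zero_mem _
    | add u v _ _ hu hv =>
      have : s.symm ∘ (u + v) = s.symm ∘ u + s.symm ∘ v := by funext j; simp
      rw [this]; exact Submodule.add_mem _ hu hv
    | smul c u _ hu =>
      have : s.symm ∘ (c • u) = s.symm c • (s.symm ∘ u) := by funext j; simp
      rw [this]; exact Submodule.smul_mem _ _ hu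
  have hcomp : s.symm ∘ (s ∘ y) = y := by funext j; simp
  rw [← hcomp]
  exact hback _ hmem

/-- Hermann's bound. One elimination step replaces `P` by `P (P d + d)`, hence `2 P d` by at most its
square, and increases the bound by `P d`; the term `P * d` on the right of the hypothesis absorbs
these increments. -/
lemma syzBound_infinite (K : Type*) [Field K] [Infinite K] (d : ℕ) (hd : 1 ≤ d) (N : ℕ) :
    ∀ P B : ℕ, 1 ≤ P → (2 * P * d) ^ 2 ^ N ≤ B + P * d → SyzBound K N P d B := by
  induction N with
  | zero =>
    intro P B _ _ ι κ _ _ _ _ _ A _ y hy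
    refine Submodule.subset_span ⟨hy, fun j => ?_⟩
    rw [totalDegree_eq_zero_iff_eq_C.mpr (eq_C_of_isEmpty (y j))]
    exact Nat.zero_le _
  | succ N ih =>
    intro P B hP hPB
    have hPd : 1 ≤ P * d := Nat.mul_pos hP hd
    have h1 : 2 * P * d ≤ (2 * P * d) ^ 2 ^ (N + 1) :=
      Nat.le_self_pow (by positivity) _
    have h2 : P * d ≤ B := by nlinarith
    obtain ⟨B', rfl⟩ := Nat.exists_eq_add_of_le h2
    rw [add_comm (P * d) B']
    refine syz_step (ih _ _ (Nat.mul_pos hP (Nat.add_pos_right _ hd)) ?_)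
    have h3 : 2 * (P * (P * d + d)) * d ≤ (2 * P * d) ^ 2 := by nlinarith
    have h4 : (2 * (P * (P * d + d)) * d) ^ 2 ^ N ≤ (2 * P * d) ^ 2 ^ (N + 1) := by
      calc _ ≤ ((2 * P * d) ^ 2) ^ 2 ^ N := Nat.pow_le_pow_left h3 _
        _ = _ := by rw [← pow_mul]; congr 1; ring
    have h5 : 2 * (P * d) ≤ P * (P * d + d) * d := by
      have : 2 ≤ P * d + d := by nlinarith
      nlinarith
    nlinarith

/-! ### Descent to arbitrary fields -/

/-- Applies a `K`-linear map `L → K` to all coefficients. -/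
noncomputable def mapCoeffs {K L : Type*} [Field K] [Field L] [Algebra K L] {σ : Type*}
    (π : L →ₗ[K] K) (p : MvPolynomial σ L) : MvPolynomial σ K :=
  ∑ m ∈ p.support, monomial m (π (coeff m p))

lemma coeff_mapCoeffs {K L : Type*} [Field K] [Field L] [Algebra K L] {σ : Type*}
    (π : L →ₗ[K] K) (p : MvPolynomial σ L) (m : σ →₀ ℕ) :
    coeff m (mapCoeffs π p) = π (coeff m p) := by
  classical
  rw [mapCoeffs, coeff_sum]
  simp only [coeff_monomial, Finset.sum_ite_eq', mem_support_iff]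
  split_ifs with h
  · rfl
  · rw [not_not.mp h, map_zero]

lemma totalDegree_le_of_support_subset_support {R R' : Type*} [CommSemiring R] [CommSemiring R']
    {σ : Type*} {p : MvPolynomial σ R} {q : MvPolynomial σ R'} (h : p.support ⊆ q.support) :
    p.totalDegree ≤ q.totalDegree :=
  Finset.sup_mono h

/-- A `K`-linear retraction `L → K`, applied to coefficients, carries kernel vectors over `L` to kernel
vectors over `K` and fixes those that are defined over `K`. -/
lemma syzBound_of_extension (K L : Type*) [Field K] [Field L] [Algebra K L] {N P d B : ℕ}
    (hB : SyzBound L N P d B) : SyzBound K N P d B := by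
  intro ι κ _ _ _ _ hι A hA y hy
  obtain ⟨π, hπ⟩ := (Algebra.linearMap K L).exists_leftInverse_of_injective
    (LinearMap.ker_eq_bot.mpr (algebraMap K L).injective)
  have hπ' : ∀ a : K, π (algebraMap K L a) = a := fun a => LinearMap.congr_fun hπ a
  have hadd : ∀ p q : MvPolynomial (Fin N) L,
      mapCoeffs π (p + q) = mapCoeffs π p + mapCoeffs π q := fun p q => by
    ext m; simp [coeff_mapCoeffs]
  have hzero : mapCoeffs π (0 : MvPolynomial (Fin N) L) = 0 := by
    ext m; simp [coeff_mapCoeffs]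
  have hsum : ∀ u : κ → MvPolynomial (Fin N) L,
      mapCoeffs π (∑ j, u j) = ∑ j, mapCoeffs π (u j) := fun u => by
    ext m; simp [coeff_mapCoeffs, coeff_sum]
  have hmap : ∀ p : MvPolynomial (Fin N) K, mapCoeffs π (map (algebraMap K L) p) = p := fun p => by
    ext m; rw [coeff_mapCoeffs, coeff_map, hπ']
  have hmul : ∀ (p : MvPolynomial (Fin N) K) (q : MvPolynomial (Fin N) L),
      mapCoeffs π (map (algebraMap K L) p * q) = p * mapCoeffs π q := fun p q => by
    classical
    ext m
    simp only [coeff_mapCoeffs, coeff_mul, coeff_map, map_sum, ← Algebra.smul_def, map_smul,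
      smul_eq_mul]
  have hdeg : ∀ q : MvPolynomial (Fin N) L, (mapCoeffs π q).totalDegree ≤ q.totalDegree :=
    fun q => totalDegree_le_of_support_subset_support fun m hm => by
      rw [mem_support_iff, coeff_mapCoeffs] at hm
      rw [mem_support_iff]
      intro h
      exact hm (by rw [h, map_zero])
  let A' : Matrix ι κ (MvPolynomial (Fin N) L) := A.map (map (algebraMap K L))
  have hy' := hB ι κ hι A' (fun i j => by
      refine le_trans (totalDegree_le_of_support_subset_support ?_) (hA i j)
      exact support_map_subset _ _)
    (fun j => map (algebraMap K L) (y j)) (by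
      funext i
      have := congrArg (map (algebraMap K L)) (congrFun hy i)
      simpa [A', Matrix.mulVec, dotProduct] using this)
  have hgen : ∀ w, A' *ᵥ w = 0 → (∀ j, (w j).totalDegree ≤ B) →
      (fun j => mapCoeffs π (w j)) ∈ syzSpan A B := by
    intro w hw hwB
    refine Submodule.subset_span ⟨?_, fun j => (hdeg _).trans (hwB j)⟩
    funext i
    have h := congrArg (mapCoeffs π) (congrFun hw i)
    simp only [A', Matrix.mulVec, dotProduct, Matrix.map_apply, hsum, hmul, Pi.zero_apply,
      hzero] at h
    simpa [Matrix.mulVec, dotProduct] using h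
  -- The retraction is only `K`-linear, so the multiplier is carried along through the induction.
  have hback : ∀ w ∈ syzSpan A' B, ∀ c : MvPolynomial (Fin N) L,
      (fun j => mapCoeffs π (c * w j)) ∈ syzSpan A B := by
    intro w hw
    unfold syzSpan at hw
    induction hw using Submodule.span_induction with
    | mem w hw =>
      intro c
      induction c using MvPolynomial.induction_on' with
      | monomial m a =>
        have h1 : (fun j => mapCoeffs π (monomial m a * w j)) =
            (monomial m 1 : MvPolynomial (Fin N) K) • fun j => mapCoeffs π (((C a : MvPolynomial (Fin N) L) • w) j) := by
          funext j
          rw [Pi.smul_apply, smul_eq_mul, ← hmul, map_monomial, map_one, Pi.smul_apply,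
            smul_eq_mul, ← mul_assoc, mul_comm (monomial m 1) (C a), C_mul_monomial, mul_one]
        rw [h1]
        refine Submodule.smul_mem _ _ (hgen _ ?_ fun j => ?_)
        · rw [Matrix.mulVec_smul, hw.1, smul_zero]
        · refine (totalDegree_mul _ _).trans ?_
          rw [totalDegree_C, zero_add]
          exact hw.2 j
      | add p q hp hq =>
        simp only [add_mul, hadd]
        exact Submodule.add_mem _ hp hq
    | zero =>
      intro c
      simp only [Pi.zero_apply, mul_zero, hzero]
      exact Submodule.zero_mem _
    | add u v _ _ hu hv =>
      intro c
      simp only [Pi.add_apply, mul_add, hadd]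
      exact Submodule.add_mem _ (hu c) (hv c)
    | smul c' u _ hu =>
      intro c
      simp only [Pi.smul_apply, smul_eq_mul, ← mul_assoc]
      exact hu _
  have := hback _ hy' 1
  simpa [hmap] using this

lemma syzBound_field (K : Type*) [Field K] {N d : ℕ} (hd : 1 ≤ d) :
    SyzBound K N 1 d ((2 * d) ^ 2 ^ N) :=
  syzBound_of_extension K (AlgebraicClosure K)
    (syzBound_infinite _ d hd N 1 _ le_rfl (by simp))

/-! ### Lifting syzygies from `k[X]/(f)` to `k[X]` -/

lemma isFilt_degreeLE (k : Type*) [Field k] :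
    IsFilt fun d => (Polynomial.degreeLE k (d : WithBot ℕ)).toAddSubgroup where
  one_mem := by simp [Polynomial.mem_degreeLE]
  mono := by
    intro a b hab p hp
    simp only [Submodule.mem_toAddSubgroup, Polynomial.mem_degreeLE] at hp ⊢
    exact hp.trans (by exact_mod_cast hab)
  mul_mem := by
    intro a b p q hp hq
    simp only [Submodule.mem_toAddSubgroup, Polynomial.mem_degreeLE] at hp hq ⊢
    exact (Polynomial.degree_mul_le _ _).trans (by push_cast; exact add_le_add hp hq)

/-- If `deg f` exceeds the degree of all minors of `M`, then `M` has the same rank over `k(X)` as modulo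
`f`, so that kernel vectors modulo `f` lift: with `M W M = δ M` and `u δ ≡ 1`, the vector
`u (δ - W M) w` lies in the kernel and is congruent to `w`. -/
lemma exists_lift_kernel {k : Type*} [Field k] {f : Polynomial k} (hf : Irreducible f)
    {ρ γ : Type*} [Fintype ρ] [Fintype γ] [DecidableEq ρ] [DecidableEq γ] {d : ℕ}
    (M : Matrix ρ γ (Polynomial k)) (hM : ∀ a b, (M a b).natDegree ≤ d)
    (hlarge : Fintype.card ρ * d < f.natDegree) (w : γ → Polynomial k)
    (hw : ∀ a, AdjoinRoot.mk f ((M *ᵥ w) a) = 0) :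
    ∃ w', M *ᵥ w' = 0 ∧ ∀ b, AdjoinRoot.mk f (w' b) = AdjoinRoot.mk f (w b) := by
  have : Fact (Irreducible f) := ⟨hf⟩
  obtain ⟨δ, hδ0, hδ, W, hW, -⟩ := exists_genInv (isFilt_degreeLE k) (d := d) M
    (fun a b => by
      simpa [Polynomial.mem_degreeLE] using Polynomial.natDegree_le_iff_degree_le.mp (hM a b))
  have hδ' : δ.natDegree ≤ Fintype.card ρ * d := by
    rw [Polynomial.natDegree_le_iff_degree_le]
    simpa [Polynomial.mem_degreeLE] using hδ
  have hδf : AdjoinRoot.mk f δ ≠ 0 := by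
    intro h
    have := Polynomial.natDegree_le_of_dvd (AdjoinRoot.mk_eq_zero.mp h) hδ0
    omega
  obtain ⟨u, hu⟩ := AdjoinRoot.mk_surjective (g := f) (AdjoinRoot.mk f δ)⁻¹
  refine ⟨u • (δ • w - W *ᵥ (M *ᵥ w)), ?_, fun b => ?_⟩
  · rw [Matrix.mulVec_smul, Matrix.mulVec_sub, Matrix.mulVec_smul, Matrix.mulVec_mulVec,
      Matrix.mulVec_mulVec, hW, Matrix.smul_mulVec, sub_self, smul_zero]
  · have h0 : AdjoinRoot.mk f ((W *ᵥ (M *ᵥ w)) b) = 0 := by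
      rw [Matrix.mulVec, dotProduct, map_sum]
      exact Finset.sum_eq_zero fun a _ => by rw [map_mul, hw, mul_zero]
    simp only [Pi.smul_apply, Pi.sub_apply, smul_eq_mul, map_mul, map_sub, h0, sub_zero, hu]
    rw [← mul_assoc, inv_mul_cancel₀ hδf, one_mul]

/-- The exponents all of whose entries are at most `B`. -/
noncomputable def box (N B : ℕ) : Finset (Fin N →₀ ℕ) :=
  Finset.Iic (Finsupp.equivFunOnFinite.symm fun _ => B)

lemma mem_box {N B : ℕ} {m : Fin N →₀ ℕ} : m ∈ box N B ↔ ∀ l, m l ≤ B := by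
  simp [box, Finsupp.le_def]

lemma card_box_le (N B : ℕ) : (box N B).card ≤ (B + 1) ^ N := by
  let φ : box N B → (Fin N → Fin (B + 1)) := fun m l =>
    ⟨m.1 l, Nat.lt_succ_of_le (mem_box.mp m.2 l)⟩
  have hφ : Function.Injective φ := by
    intro m m' h
    ext l
    simpa [φ] using congrArg Fin.val (congrFun h l)
  simpa using Fintype.card_le_of_injective φ hφ

lemma le_of_coeff_ne_zero {R : Type*} [CommRing R] {N d : ℕ} {p : MvPolynomial (Fin N) R}
    (hp : p.totalDegree ≤ d) {m : Fin N →₀ ℕ} (hm : coeff m p ≠ 0) (l : Fin N) : m l ≤ d :=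
  (Finsupp.le_degree l m).trans ((le_totalDegree (mem_support_iff.mpr hm)).trans hp)

/-- A syzygy of bounded degree modulo `f` is a kernel vector of a finite matrix over `k[X]`, with one row
for each exponent in `box N (B + d)`. -/
lemma exists_lift_syzygy {k : Type*} [Field k] {f : Polynomial k} (hf : Irreducible f)
    {N d B t : ℕ} (h : Fin t → MvPolynomial (Fin N) (Polynomial k))
    (hdeg : ∀ j, (h j).totalDegree ≤ d) (hcoeff : ∀ j m, (coeff m (h j)).natDegree ≤ d)
    (hlarge : (B + d + 1) ^ N * d < f.natDegree)
    (w : Fin t → MvPolynomial (Fin N) (AdjoinRoot f)) (hwB : ∀ j, (w j).totalDegree ≤ B)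
    (hw : ∑ j, map (AdjoinRoot.mk f) (h j) * w j = 0) :
    ∃ w' : Fin t → MvPolynomial (Fin N) (Polynomial k), ∑ j, h j * w' j = 0 ∧
      ∀ j, map (AdjoinRoot.mk f) (w' j) = w j := by
  classical
  let M : Matrix (box N (B + d)) (Fin t × box N B) (Polynomial k) :=
    Matrix.of fun m x => coeff m.1 (h x.1 * monomial x.2.1 1)
  let asm : (Fin t × box N B → Polynomial k) → Fin t → MvPolynomial (Fin N) (Polynomial k) :=
    fun v j => ∑ e : box N B, monomial e.1 (v (j, e))
  have hMasm : ∀ v (m : box N (B + d)), (M *ᵥ v) m = coeff m.1 (∑ j, h j * asm v j) := by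
    intro v m
    simp only [M, asm, Matrix.mulVec, dotProduct, Matrix.of_apply, Fintype.sum_prod_type,
      Finset.mul_sum, coeff_sum]
    refine Finset.sum_congr rfl fun j _ => Finset.sum_congr rfl fun e _ => ?_
    rw [coeff_mul_monomial', coeff_mul_monomial']
    split_ifs <;> simp
  have hout : ∀ v m, m ∉ box N (B + d) → coeff m (∑ j, h j * asm v j) = 0 := by
    intro v m hm
    simp only [asm, Finset.mul_sum, coeff_sum]
    refine Finset.sum_eq_zero fun j _ => Finset.sum_eq_zero fun e _ => ?_
    rw [coeff_mul_monomial']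
    split_ifs with hem
    · by_cases h0 : coeff (m - e.1) (h j) = 0
      · rw [h0, zero_mul]
      · refine absurd (mem_box.mpr fun l => ?_) hm
        have h1 := le_of_coeff_ne_zero (hdeg j) h0 l
        have h2 := mem_box.mp e.2 l
        rw [Finsupp.tsub_apply] at h1
        omega
    · rfl
  have hmapasm : ∀ v, (∀ j (e : box N B), AdjoinRoot.mk f (v (j, e)) = coeff e.1 (w j)) →
      ∀ j, map (AdjoinRoot.mk f) (asm v j) = w j := by
    intro v hv j
    ext m
    simp only [asm, map_sum, map_monomial, coeff_sum, coeff_monomial, hv]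
    by_cases hm : m ∈ box N B
    · rw [Finset.sum_eq_single ⟨m, hm⟩]
      · simp
      · intro e _ he
        exact if_neg fun h => he (Subtype.ext h)
      · simp
    · have h0 : coeff m (w j) = 0 := by
        by_contra h0
        exact hm (mem_box.mpr (le_of_coeff_ne_zero (hwB j) h0))
      rw [h0]
      exact Finset.sum_eq_zero fun e _ => if_neg fun hem : e.1 = m => hm (hem ▸ e.2)
  choose lift hlift using AdjoinRoot.mk_surjective (g := f)
  let w₀ : Fin t × box N B → Polynomial k := fun x => lift (coeff x.2.1 (w x.1))
  have hw₀ := hmapasm w₀ fun j e => hlift _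
  obtain ⟨w', hw', hww⟩ := exists_lift_kernel hf M (d := d) (fun m x => by
      simp only [M, Matrix.of_apply, coeff_mul_monomial', mul_one]
      split_ifs
      · exact hcoeff _ _
      · simp)
    (lt_of_le_of_lt (Nat.mul_le_mul_right d (by simpa using card_box_le N (B + d))) hlarge) w₀
    (fun m => by
      rw [hMasm, ← coeff_map, map_sum]
      simp only [map_mul, hw₀, hw, coeff_zero])
  refine ⟨asm w', ?_, hmapasm w' fun j e => by rw [hww]; exact hlift _⟩
  ext1 m
  by_cases hm : m ∈ box N (B + d)
  · rw [← hMasm w' ⟨m, hm⟩, hw']; simp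
  · rw [hout w' m hm, coeff_zero]

/-- If `deg f` is large, then `f` is a nonzerodivisor modulo the ideal generated by the `h j`: reducing
`f g = ∑ hⱼ aⱼ` modulo `f` gives a syzygy, which lifts to a syzygy `a'`; then `a - a' = f b` and
`g = ∑ hⱼ bⱼ`. -/
lemma cancel_of_large_degree {k : Type*} [Field k] {f : Polynomial k} (hf : Irreducible f)
    {N d t : ℕ} (hd : 1 ≤ d) (h : Fin t → MvPolynomial (Fin N) (Polynomial k))
    (hdeg : ∀ j, (h j).totalDegree ≤ d) (hcoeff : ∀ j m, (coeff m (h j)).natDegree ≤ d)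
    (hlarge : ((2 * d) ^ 2 ^ N + d + 1) ^ N * d < f.natDegree)
    (a : Fin t → MvPolynomial (Fin N) (Polynomial k)) (g : MvPolynomial (Fin N) (Polynomial k))
    (hfg : C f * g = ∑ j, h j * a j) :
    ∃ b : Fin t → MvPolynomial (Fin N) (Polynomial k), g = ∑ j, h j * b j := by
  have : Fact (Irreducible f) := ⟨hf⟩
  set φ := AdjoinRoot.mk f with hφ
  let A : Matrix Unit (Fin t) (MvPolynomial (Fin N) (AdjoinRoot f)) :=
    Matrix.of fun _ j => map φ (h j)
  have hA : ∀ w, A *ᵥ w = 0 ↔ ∑ j, map φ (h j) * w j = 0 := fun w => by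
    simp [A, funext_iff, Matrix.mulVec, dotProduct]
  have hmem := syzBound_field (AdjoinRoot f) (N := N) hd Unit (Fin t) (by simp) A
    (fun _ j => le_trans (totalDegree_le_of_support_subset_support (support_map_subset _ _)) (hdeg j))
    (fun j => map φ (a j)) (by
      rw [hA]
      have := congrArg (map φ) hfg
      simp only [map_mul, map_sum, map_C] at this
      rw [← this, hφ, AdjoinRoot.mk_self, C_0, zero_mul])
  have hlift : ∀ w ∈ syzSpan A ((2 * d) ^ 2 ^ N),
      ∃ w' : Fin t → MvPolynomial (Fin N) (Polynomial k), ∑ j, h j * w' j = 0 ∧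
        ∀ j, map φ (w' j) = w j := by
    intro w hw
    unfold syzSpan at hw
    induction hw using Submodule.span_induction with
    | mem w hw => exact exists_lift_syzygy hf h hdeg hcoeff hlarge w hw.2 ((hA w).mp hw.1)
    | zero => exact ⟨0, by simp, by simp⟩
    | add u v _ _ hu hv =>
      obtain ⟨u', hu1, hu2⟩ := hu
      obtain ⟨v', hv1, hv2⟩ := hv
      exact ⟨u' + v', by simp [mul_add, Finset.sum_add_distrib, hu1, hv1],
        fun j => by simp [hu2, hv2]⟩
    | smul c u _ hu =>
      obtain ⟨u', hu1, hu2⟩ := hu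
      obtain ⟨c', rfl⟩ := map_surjective φ AdjoinRoot.mk_surjective c
      refine ⟨c' • u', ?_, fun j => by simp [hu2]⟩
      simp only [Pi.smul_apply, smul_eq_mul, mul_left_comm _ c', ← Finset.mul_sum, hu1, mul_zero]
  obtain ⟨a', ha1, ha2⟩ := hlift _ hmem
  have hdvd : ∀ j, C f ∣ a j - a' j := fun j => by
    rw [C_dvd_iff_map_hom_eq_zero φ f (fun r => AdjoinRoot.mk_eq_zero), map_sub, ha2, sub_self]
  choose b hb using hdvd
  refine ⟨b, mul_left_cancel₀ (C_ne_zero.mpr hf.ne_zero) ?_⟩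
  rw [hfg, Finset.mul_sum, ← sub_zero (∑ j, h j * a j), ← ha1, ← Finset.sum_sub_distrib]
  refine Finset.sum_congr rfl fun j _ => ?_
  rw [← mul_sub, hb]
  ring

/-! ### Isolating the variable `xᵢ` -/

/-- The isomorphism `k[x₀,…,x_N] ≃ k[xᵢ][xⱼ : j ≠ i]`. -/
noncomputable def isolate (k : Type*) [Field k] {N : ℕ} (i : Fin (N + 1)) :
    MvPolynomial (Fin (N + 1)) k ≃ₐ[k] MvPolynomial (Fin N) (Polynomial k) :=
  (renameEquiv k (_root_.finSuccEquiv' i)).trans (optionEquivRight k (Fin N))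

lemma isolate_X_self {k : Type*} [Field k] {N : ℕ} (i : Fin (N + 1)) :
    isolate k i (X i) = C Polynomial.X := by
  simp [isolate]

lemma isolate_X_succAbove {k : Type*} [Field k] {N : ℕ} (i : Fin (N + 1)) (j : Fin N) :
    isolate k i (X (i.succAbove j)) = X j := by
  simp [isolate]

lemma isolate_monomial {k : Type*} [Field k] {N : ℕ} (i : Fin (N + 1)) (s : Fin (N + 1) →₀ ℕ)
    (a : k) : isolate k i (monomial s a) =
      monomial (Finsupp.equivFunOnFinite.symm fun j => s (i.succAbove j))
        (Polynomial.C a * Polynomial.X ^ s i) := by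
  rw [monomial_eq, monomial_eq, Finsupp.prod_fintype _ _ (by simp), Finsupp.prod_fintype _ _
    (by simp), Fin.prod_univ_succAbove _ i]
  simp only [map_mul, map_prod, map_pow, isolate_X_self, isolate_X_succAbove,
    Finsupp.equivFunOnFinite_symm_apply_apply]
  rw [← mul_assoc]
  congr 2
  simp [isolate]

lemma isolate_degree {k : Type*} [Field k] {N d : ℕ} (i : Fin (N + 1))
    (p : MvPolynomial (Fin (N + 1)) k) (hp : p.totalDegree ≤ d) :
    (isolate k i p).totalDegree ≤ d ∧ ∀ m, (coeff m (isolate k i p)).natDegree ≤ d := by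
  classical
  have hs : ∀ s ∈ p.support, s i + ∑ j, s (i.succAbove j) ≤ d := fun s hs => by
    have h := (le_totalDegree hs).trans hp
    rwa [Finsupp.sum_fintype _ _ (by simp), Fin.sum_univ_succAbove _ i] at h
  rw [p.as_sum, map_sum]
  simp only [isolate_monomial]
  refine ⟨totalDegree_finsetSum_le fun s hsp => ?_, fun m => ?_⟩
  · refine (totalDegree_monomial_le _ _).trans ?_
    rw [Finsupp.sum_fintype _ _ (by simp)]
    simp only [Finsupp.equivFunOnFinite_symm_apply_apply, id_eq]
    have := hs s hsp
    omega
  · rw [coeff_sum]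
    refine Polynomial.natDegree_sum_le_of_forall_le _ _ fun s hsp => ?_
    rw [coeff_monomial]
    split_ifs
    · refine (Polynomial.natDegree_C_mul_X_pow_le _ _).trans ?_
      have := hs s hsp
      omega
    · simp

lemma isolate_aeval {k : Type*} [Field k] {N : ℕ} (i : Fin (N + 1)) (f : Polynomial k) :
    isolate k i (Polynomial.aeval (X i) f) = C f := by
  rw [← Polynomial.aeval_algHom_apply, isolate_X_self, ← MvPolynomial.algebraMap_eq,
    Polynomial.aeval_algebraMap_apply, Polynomial.aeval_X_left_apply]

lemma numeric_bound {N d : ℕ} (hd : 1 ≤ d) :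
    ((2 * d) ^ 2 ^ N + d + 1) ^ N * d ≤
      2 ^ ((N + 1) * 2 ^ (2 * (N + 1) + 6)) * d ^ ((N + 1) * 2 ^ (3 * (N + 1) + 2)) := by
  have h1 : 2 * d ≤ (2 * d) ^ 2 ^ N := Nat.le_self_pow (by positivity) _
  have h2 : (2 * d) ^ 2 ^ N + d + 1 ≤ 2 * (2 * d) ^ 2 ^ N := by omega
  have hN : N * 2 ^ N + N ≤ (N + 1) * 2 ^ (2 * (N + 1) + 6) := by
    have h3 : 2 ^ N * 2 ≤ 2 ^ (2 * (N + 1) + 6) := by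
      rw [← pow_succ]; exact Nat.pow_le_pow_right (by norm_num) (by omega)
    have h4 : 1 ≤ 2 ^ N := Nat.one_le_two_pow
    nlinarith
  have hN' : N * 2 ^ N + 1 ≤ (N + 1) * 2 ^ (3 * (N + 1) + 2) := by
    have h3 : 2 ^ N ≤ 2 ^ (3 * (N + 1) + 2) := Nat.pow_le_pow_right (by norm_num) (by omega)
    have h4 : 1 ≤ 2 ^ N := Nat.one_le_two_pow
    nlinarith
  calc ((2 * d) ^ 2 ^ N + d + 1) ^ N * d ≤ (2 * (2 * d) ^ 2 ^ N) ^ N * d :=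
        Nat.mul_le_mul_right _ (Nat.pow_le_pow_left h2 _)
    _ = 2 ^ (N * 2 ^ N + N) * d ^ (N * 2 ^ N + 1) := by
        rw [mul_pow, ← pow_mul, mul_pow, mul_comm (2 ^ N) N, pow_add, pow_add]; ring
    _ ≤ _ := Nat.mul_le_mul (Nat.pow_le_pow_right (by norm_num) hN) (Nat.pow_le_pow_right hd hN')

/-! ### The degree bound -/

/-- If an irreducible univariate polynomial `f ∈ k[xᵢ]` admits some
`g ∉ I` with `f·g ∈ I`, then `deg f ≤ 2^(n·2^(2n+6))·d^(n·2^(3n+2))`. -/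
theorem irreducible_univariate_factor_degree_bound
    (k : Type*) [Field k] (n d : ℕ) (hn : 1 ≤ n) (hd : 1 ≤ d)
    (I : Ideal (MvPolynomial (Fin n) k))
    (S : Set (MvPolynomial (Fin n) k)) (hgen : I = Ideal.span S)
    (hdeg : ∀ g ∈ S, g.totalDegree ≤ d)
    (i : Fin n) (f : Polynomial k) (hf : Irreducible f)
    (g : MvPolynomial (Fin n) k)
    (hfg : Polynomial.aeval (MvPolynomial.X i : MvPolynomial (Fin n) k) f * g ∈ I)
    (hg : g ∉ I) :
    f.natDegree ≤ 2 ^ (n * 2 ^ (2 * n + 6)) * d ^ (n * 2 ^ (3 * n + 2)) := by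
  obtain ⟨N, rfl⟩ := Nat.exists_eq_add_of_le' hn
  by_contra! hcon
  have hlarge := (numeric_bound (N := N) hd).trans_lt hcon
  subst hgen
  obtain ⟨t, a, h, hsum⟩ := Submodule.mem_span_set'.mp hfg
  have hsum' : C f * isolate k i g = ∑ j, isolate k i (h j).1 * isolate k i (a j) := by
    rw [← isolate_aeval i f, ← map_mul, ← hsum, map_sum]
    exact Finset.sum_congr rfl fun j _ => by rw [smul_eq_mul, map_mul, mul_comm]
  obtain ⟨b, hb⟩ := cancel_of_large_degree hf hd (fun j => isolate k i (h j).1)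
    (fun j => (isolate_degree i _ (hdeg _ (h j).2)).1)
    (fun j => (isolate_degree i _ (hdeg _ (h j).2)).2) hlarge _ _ hsum'
  apply hg
  have hg' : g = ∑ j, (isolate k i).symm (b j) • (h j).1 := by
    apply (isolate k i).injective
    rw [hb, map_sum]
    refine Finset.sum_congr rfl fun j _ => ?_
    rw [smul_eq_mul, map_mul, AlgEquiv.apply_symm_apply, mul_comm]
  rw [hg']
  exact Submodule.sum_mem _ fun j _ => Submodule.smul_mem _ _ (Submodule.subset_span (h j).2)
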